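/- (Second moment of the score in terms of the posterior covariance, equation (2-norm of score) used in Lemma B.4.) For every t > 0, E_{x ∼ p_t}[ ‖∇ ln p_t(x)‖² ] = d/(1 − e^{−2t}) − (e^{−2t}/(1 − e^{−2t})²) E_{x ∼ p_t}[Tr Σ_t(x)]. -/

import Mathlib

open MeasureTheory Real
open scoped ENNReal RealInnerProductSpace

noncomputable section

/-- `ℝ^d` as a Euclidean space. -/
abbrev Euc (d : ℕ) := EuclideanSpace ℝ (Fin d)

/-- The standard Gaussian measure `γ^d` on `ℝ^d`. -/
def stdGaussian (d : ℕ) : Measure (Euc d) :=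
  volume.withDensity fun x => ENNReal.ofReal ((2 * π) ^ (-(d : ℝ) / 2) * exp (-‖x‖ ^ 2 / 2))

/-- The unnormalized measure with density `exp (-V)` with respect to Lebesgue measure. -/
def gibbs (d : ℕ) (V : Euc d → ℝ) : Measure (Euc d) :=
  volume.withDensity fun x => ENNReal.ofReal (exp (-V x))

/-- The time-`t` marginal `p_t` of the OU process `dX_t = -X_t dt + √2 dB_t` started at `p`,
i.e. the law of `e^{-t} X_0 + √(1-e^{-2t}) Z` with `X_0 ∼ p`, `Z ∼ γ^d` independent. -/
def ouMarginal (d : ℕ) (p : Measure (Euc d)) (t : ℝ) : Measure (Euc d) :=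
  (p.prod (stdGaussian d)).map fun xz =>
    exp (-t) • xz.1 + Real.sqrt (1 - exp (-2 * t)) • xz.2

/-- The (smooth, positive) density of `p_t`. -/
def ouDensity (d : ℕ) (p : Measure (Euc d)) (t : ℝ) (x : Euc d) : ℝ :=
  (2 * π * (1 - exp (-2 * t))) ^ (-(d : ℝ) / 2) *
    ∫ z, exp (-‖x - exp (-t) • z‖ ^ 2 / (2 * (1 - exp (-2 * t)))) ∂p

/-- The score `∇ ln p_t`. -/
def score (d : ℕ) (p : Measure (Euc d)) (t : ℝ) (x : Euc d) : Euc d :=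
  gradient (fun y => Real.log (ouDensity d p t y)) x

/-- The conditional law `p_{0|t}(·|x)` of `X_0` given `X_t = x`, with density (w.r.t. `p`)
proportional to `z ↦ exp (-‖x - e^{-t} z‖² / (2 (1 - e^{-2t})))`. -/
def posterior (d : ℕ) (p : Measure (Euc d)) (t : ℝ) (x : Euc d) : Measure (Euc d) :=
  ((p.withDensity fun z =>
      ENNReal.ofReal (exp (-‖x - exp (-t) • z‖ ^ 2 / (2 * (1 - exp (-2 * t)))))) Set.univ)⁻¹ •
    (p.withDensity fun z =>
      ENNReal.ofReal (exp (-‖x - exp (-t) • z‖ ^ 2 / (2 * (1 - exp (-2 * t))))))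

/-- Kullback–Leibler divergence `KL(μ ‖ ν) = ∫ log (dμ/dν) dμ`. -/
def KLdiv {α : Type*} [MeasurableSpace α] (μ ν : Measure α) : ℝ :=
  ∫ x, Real.log ((μ.rnDeriv ν x).toReal) ∂μ

/-- Mean of the posterior `p_{0|t}(·|x)`. -/
def postMean (d : ℕ) (p : Measure (Euc d)) (t : ℝ) (x : Euc d) : Euc d :=
  ∫ z, z ∂(posterior d p t x)

/-- Trace of the covariance matrix of the posterior `p_{0|t}(·|x)`. -/
def postTrCov (d : ℕ) (p : Measure (Euc d)) (t : ℝ) (x : Euc d) : ℝ :=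
  ∫ z, ‖z - postMean d p t x‖ ^ 2 ∂(posterior d p t x)

/-!
Consider a noisy observation `X = Y + √s Z` of a random vector `Y`, with `Z` an independent standard
Gaussian. Tweedie's formula says that the score of the law of `X` is `s⁻¹ (E[Y | X = x] - x)`. Hence
the bias–variance decomposition of `x - Y` under the law of `Y` given `X = x` reads
`E[‖X - Y‖² | X = x] = s² ‖score x‖² + tr Cov(Y | X = x)`. Averaging over `X`, the left-hand side
becomes `s E‖Z‖² = s · dim`, which is the claim; the conditional moments exist because Gaussian
decay makes every posterior square integrable. The Ornstein–Uhlenbeck process is the case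
`Y = e^{-t} X₀`, `s = 1 - e^{-2t}`.
-/

section GaussianDensity

variable {E : Type*} [NormedAddCommGroup E] [InnerProductSpace ℝ E]

/-- The Lebesgue density of the centered Gaussian law with covariance `s • id` on `E`. -/
def gaussianDensity (s : ℝ) (x : E) : ℝ :=
  (2 * π * s) ^ (-(Module.finrank ℝ E : ℝ) / 2) * exp (-‖x‖ ^ 2 / (2 * s))

@[fun_prop]
lemma continuous_gaussianDensity (s : ℝ) : Continuous (gaussianDensity s : E → ℝ) := by
  unfold gaussianDensity
  fun_prop

lemma gaussianDensity_zero (s : ℝ) :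
    gaussianDensity s (0 : E) = (2 * π * s) ^ (-(Module.finrank ℝ E : ℝ) / 2) := by
  simp [gaussianDensity]

lemma gaussianDensity_eq_zero_mul_exp (s : ℝ) (x : E) :
    gaussianDensity s x = gaussianDensity s (0 : E) * exp (-‖x‖ ^ 2 / (2 * s)) := by
  rw [gaussianDensity_zero, gaussianDensity]

lemma gaussianDensity_pos {s : ℝ} (hs : 0 < s) (x : E) : 0 < gaussianDensity s x := by
  unfold gaussianDensity
  positivity

lemma gaussianDensity_le_zero {s : ℝ} (hs : 0 < s) (x : E) :
    gaussianDensity s x ≤ gaussianDensity s (0 : E) := by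
  rw [gaussianDensity_eq_zero_mul_exp]
  refine mul_le_of_le_one_right (gaussianDensity_pos hs 0).le (exp_le_one_iff.2 ?_)
  rw [neg_div]
  exact neg_nonpos.2 (by positivity)

lemma gaussianDensity_mul_norm_sq_le {s : ℝ} (hs : 0 < s) (x : E) :
    gaussianDensity s x * ‖x‖ ^ 2 ≤ 2 * s * gaussianDensity s (0 : E) := by
  have h_exp : exp (-‖x‖ ^ 2 / (2 * s)) * (‖x‖ ^ 2 / (2 * s)) ≤ 1 := by
    rw [neg_div, exp_neg, inv_mul_le_one₀ (exp_pos _)]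
    linarith [add_one_le_exp (‖x‖ ^ 2 / (2 * s))]
  calc gaussianDensity s x * ‖x‖ ^ 2
      = 2 * s * gaussianDensity s (0 : E) *
          (exp (-‖x‖ ^ 2 / (2 * s)) * (‖x‖ ^ 2 / (2 * s))) := by
        rw [gaussianDensity_eq_zero_mul_exp]
        field_simp
    _ ≤ 2 * s * gaussianDensity s (0 : E) :=
        mul_le_of_le_one_right (mul_pos (by positivity) (gaussianDensity_pos hs 0)).le h_exp

lemma gaussianDensity_mul_norm_le {s : ℝ} (hs : 0 < s) (x : E) :
    gaussianDensity s x * ‖x‖ ≤ (1 + 2 * s) * gaussianDensity s (0 : E) := by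
  have h_norm : ‖x‖ ≤ 1 + ‖x‖ ^ 2 := by nlinarith [sq_nonneg (‖x‖ - 1)]
  calc gaussianDensity s x * ‖x‖
      ≤ gaussianDensity s x * (1 + ‖x‖ ^ 2) := by
        gcongr
        exact (gaussianDensity_pos hs x).le
    _ ≤ (1 + 2 * s) * gaussianDensity s (0 : E) := by
        linarith [gaussianDensity_le_zero hs x, gaussianDensity_mul_norm_sq_le hs x]

lemma gaussianDensity_zero_mul_rpow {s : ℝ} (hs : 0 < s) :
    gaussianDensity s (0 : E) * (π / (2 * s)⁻¹) ^ (Module.finrank ℝ E / 2 : ℝ) = 1 := by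
  rw [gaussianDensity_zero, div_inv_eq_mul, mul_left_comm, ← mul_assoc, ← rpow_add (by positivity),
    neg_div, neg_add_cancel, rpow_zero]

lemma hasGradientAt_gaussianDensity [CompleteSpace E] (s : ℝ) (x : E) :
    HasGradientAt (gaussianDensity s) (-(s⁻¹ * gaussianDensity s x) • x) x := by
  have h_norm_sq : HasFDerivAt (fun y : E => ‖y‖ ^ 2) (2 • innerSL ℝ x) x :=
    (hasStrictFDerivAt_norm_sq x).hasFDerivAt
  have h_exp := ((h_norm_sq.neg.mul_const (2 * s)⁻¹).exp).const_mul (gaussianDensity s (0 : E))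
  rw [hasGradientAt_iff_hasFDerivAt]
  refine (h_exp.congr_fderiv ?_).congr_of_eventuallyEq
    (.of_forall fun y => gaussianDensity_eq_zero_mul_exp s y)
  ext v
  simp [gaussianDensity_eq_zero_mul_exp s x, div_eq_mul_inv]
  ring

variable [FiniteDimensional ℝ E] [MeasurableSpace E] [BorelSpace E]

lemma integral_norm_sq_stdGaussian :
    ∫ g, ‖g‖ ^ 2 ∂ProbabilityTheory.stdGaussian E = Module.finrank ℝ E := by
  have h_memLp : MemLp id 2 (ProbabilityTheory.stdGaussian E) :=
    ProbabilityTheory.IsGaussian.memLp_two_id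
  let b := stdOrthonormalBasis ℝ E
  calc ∫ g, ‖g‖ ^ 2 ∂ProbabilityTheory.stdGaussian E
      = ∑ i, ∫ g, ⟪b i, g⟫ ^ 2 ∂ProbabilityTheory.stdGaussian E := by
        simp_rw [← b.sum_sq_inner_right]
        exact integral_finsetSum _ fun i _ => (h_memLp.const_inner (b i)).integrable_sq
    _ = ∑ i, ProbabilityTheory.covarianceBilin (ProbabilityTheory.stdGaussian E) (b i) (b i) := by
        simp [ProbabilityTheory.covarianceBilin_apply h_memLp, sq]
    _ = Module.finrank ℝ E := by
        simp [ProbabilityTheory.covarianceBilin_stdGaussian, innerSL_apply_apply ℝ]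

lemma integral_gaussianDensity {s : ℝ} (hs : 0 < s) : ∫ x : E, gaussianDensity s x = 1 := by
  have h_exp (x : E) :
      gaussianDensity s x = gaussianDensity s (0 : E) * exp (-(2 * s)⁻¹ * ‖x‖ ^ 2) := by
    rw [gaussianDensity_eq_zero_mul_exp]
    ring_nf
  rw [integral_congr_ae (.of_forall h_exp), integral_const_mul,
    GaussianFourier.integral_rexp_neg_mul_sq_norm (by positivity), gaussianDensity_zero_mul_rpow hs]

lemma integrable_gaussianDensity {s : ℝ} (hs : 0 < s) :
    Integrable (gaussianDensity s : E → ℝ) :=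
  .of_integral_ne_zero (by simp [integral_gaussianDensity hs])

lemma charFun_withDensity_gaussianDensity {s : ℝ} (hs : 0 < s) (ξ : E) :
    charFun (volume.withDensity fun x : E => ENNReal.ofReal (gaussianDensity s x)) ξ =
      Complex.exp (-(s * ‖ξ‖ ^ 2) / 2) := by
  have h_pow : (gaussianDensity s (0 : E) : ℂ) *
      (π / ((2 * s)⁻¹ : ℝ)) ^ (Module.finrank ℝ E / 2 : ℂ) = 1 := by
    have h_pow_cast := congrArg ((↑) : ℝ → ℂ) (gaussianDensity_zero_mul_rpow (E := E) hs)
    rw [Complex.ofReal_mul, Complex.ofReal_cpow (by positivity)] at h_pow_cast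
    simpa using h_pow_cast
  rw [charFun_apply, integral_withDensity_eq_integral_toReal_smul (by fun_prop) (by simp)]
  calc ∫ x : E, (ENNReal.ofReal (gaussianDensity s x)).toReal • Complex.exp (⟪x, ξ⟫ * Complex.I)
      = ∫ x : E, (gaussianDensity s (0 : E) : ℂ) *
          Complex.exp (-((2 * s)⁻¹ : ℝ) * ‖x‖ ^ 2 + Complex.I * ⟪ξ, x⟫) := by
        congr with x
        rw [ENNReal.toReal_ofReal (gaussianDensity_pos hs x).le, gaussianDensity_eq_zero_mul_exp,
          Complex.exp_add, real_inner_comm]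
        simp [div_eq_mul_inv]
        ring_nf
    _ = Complex.exp (Complex.I ^ 2 * ‖ξ‖ ^ 2 / (4 * ((2 * s)⁻¹ : ℝ))) := by
        rw [integral_const_mul, GaussianFourier.integral_cexp_neg_mul_sq_norm_add
          (by rw [Complex.ofReal_re]; positivity), ← mul_assoc, h_pow, one_mul]
    _ = Complex.exp (-(s * ‖ξ‖ ^ 2) / 2) := by
        congr 1
        push_cast
        rw [Complex.I_sq]
        field_simp
        norm_num

lemma withDensity_gaussianDensity {s : ℝ} (hs : 0 < s) :
    volume.withDensity (fun x : E => ENNReal.ofReal (gaussianDensity s x)) =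
      (ProbabilityTheory.stdGaussian E).map (√s • ·) := by
  have := isFiniteMeasure_withDensity_ofReal (integrable_gaussianDensity (E := E) hs).2
  refine Measure.ext_of_charFun (funext fun ξ => ?_)
  rw [charFun_withDensity_gaussianDensity hs, charFun_map_smul,
    ProbabilityTheory.charFun_stdGaussian, norm_smul, norm_of_nonneg (sqrt_nonneg s)]
  norm_cast
  rw [mul_pow, sq_sqrt hs.le]

lemma lintegral_comp_add_smul_stdGaussian {s : ℝ} (hs : 0 < s) (w : E) {f : E → ℝ≥0∞}
    (hf : Measurable f) :
    ∫⁻ g, f (w + √s • g) ∂ProbabilityTheory.stdGaussian E =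
      ∫⁻ x, ENNReal.ofReal (gaussianDensity s (x - w)) * f x := by
  calc ∫⁻ g, f (w + √s • g) ∂ProbabilityTheory.stdGaussian E
      = ∫⁻ y, f (w + y) ∂(ProbabilityTheory.stdGaussian E).map (√s • ·) := by
        rw [lintegral_map (by fun_prop) (by fun_prop)]
    _ = ∫⁻ y, ENNReal.ofReal (gaussianDensity s y) * f (w + y) := by
        rw [← withDensity_gaussianDensity hs,
          lintegral_withDensity_eq_lintegral_mul _ (by fun_prop) (by fun_prop)]
        rfl
    _ = ∫⁻ x, ENNReal.ofReal (gaussianDensity s (x - w)) * f x := by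
        simpa using lintegral_add_left_eq_self (μ := volume)
          (fun x => ENNReal.ofReal (gaussianDensity s (x - w)) * f x) w

end GaussianDensity

lemma tilted_eq_inv_smul_withDensity {α : Type*} [MeasurableSpace α] {μ : Measure α} [NeZero μ]
    {f : α → ℝ} (hf : Integrable (fun a => exp (f a)) μ) :
    μ.tilted f = ((μ.withDensity fun a => ENNReal.ofReal (exp (f a))) Set.univ)⁻¹ •
      μ.withDensity fun a => ENNReal.ofReal (exp (f a)) := by
  have h_pos := integral_exp_pos hf
  have h_mass : (μ.withDensity fun a => ENNReal.ofReal (exp (f a))) Set.univ =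
      ENNReal.ofReal (∫ a, exp (f a) ∂μ) := by
    rw [withDensity_apply _ .univ, setLIntegral_univ,
      ofReal_integral_eq_lintegral_ofReal hf (.of_forall fun a => (exp_pos _).le)]
  rw [h_mass, Measure.tilted]
  simp_rw [ENNReal.ofReal_div_of_pos h_pos, ENNReal.div_eq_inv_mul]
  exact withDensity_smul' _ _ (by simpa using h_pos)

lemma integral_norm_const_sub_sq_eq_add {Ω E : Type*} [MeasurableSpace Ω] [NormedAddCommGroup E]
    [InnerProductSpace ℝ E] [CompleteSpace E] {μ : Measure Ω} [IsProbabilityMeasure μ]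
    {Y : Ω → E} (hY : MemLp Y 2 μ) (c : E) :
    ∫ ω, ‖c - Y ω‖ ^ 2 ∂μ = ‖c - ∫ ω, Y ω ∂μ‖ ^ 2 + ∫ ω, ‖Y ω - ∫ ω, Y ω ∂μ‖ ^ 2 ∂μ := by
  set m := ∫ ω, Y ω ∂μ
  have h_centered : MemLp (fun ω => Y ω - m) 2 μ := hY.sub (memLp_const m)
  have h_int : Integrable (fun ω => Y ω - m) μ := h_centered.integrable one_le_two
  have h_sq : Integrable (fun ω => ‖Y ω - m‖ ^ 2) μ := h_centered.integrable_norm_pow two_ne_zero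
  have h_inner : Integrable (fun ω => 2 * ⟪c - m, Y ω - m⟫) μ :=
    (h_int.const_inner (c - m)).const_mul 2
  have h_cross : ∫ ω, ⟪c - m, Y ω - m⟫ ∂μ = 0 := by
    rw [integral_inner h_int, integral_sub (hY.integrable one_le_two) (integrable_const m)]
    simp [m]
  calc ∫ ω, ‖c - Y ω‖ ^ 2 ∂μ
      = ∫ ω, (‖c - m‖ ^ 2 - 2 * ⟪c - m, Y ω - m⟫ + ‖Y ω - m‖ ^ 2) ∂μ := by
        simp_rw [← norm_sub_sq_real, sub_sub_sub_cancel_right]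
    _ = ‖c - m‖ ^ 2 + ∫ ω, ‖Y ω - m‖ ^ 2 ∂μ := by
        rw [integral_add (by fun_prop) h_sq, integral_sub (integrable_const _) h_inner,
          integral_const_mul, h_cross]
        simp

lemma measurable_gradient {E : Type*} [NormedAddCommGroup E] [InnerProductSpace ℝ E]
    [CompleteSpace E] [MeasurableSpace E] [BorelSpace E] (f : E → ℝ) : Measurable (gradient f) :=
  (InnerProductSpace.toDual ℝ E).symm.continuous.measurable.comp (measurable_fderiv ℝ f)

lemma hasGradientAt_integral_of_dominated {Ω E : Type*} [MeasurableSpace Ω] {μ : Measure Ω}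
    [NormedAddCommGroup E] [InnerProductSpace ℝ E] [CompleteSpace E] {f : E → Ω → ℝ}
    {G : E → Ω → E} {bound : Ω → ℝ} {x : E} (hf_meas : ∀ y, AEStronglyMeasurable (f y) μ)
    (hf_int : Integrable (f x) μ) (hG_meas : AEStronglyMeasurable (G x) μ)
    (hG_bound : ∀ y ω, ‖G y ω‖ ≤ bound ω) (h_bound_int : Integrable bound μ)
    (h_grad : ∀ y ω, HasGradientAt (f · ω) (G y ω) y) :
    HasGradientAt (fun y => ∫ ω, f y ω ∂μ) (∫ ω, G x ω ∂μ) x := by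
  let toDual := InnerProductSpace.toDual ℝ E
  have hG_int : Integrable (G x) μ := h_bound_int.mono' hG_meas (.of_forall (hG_bound x))
  have h_dual_meas : AEStronglyMeasurable (fun ω => toDual (G x ω)) μ :=
    toDual.continuous.comp_aestronglyMeasurable hG_meas
  have h_dual_bound (y : E) (ω : Ω) : ‖toDual (G y ω)‖ ≤ bound ω := by
    simpa [toDual] using hG_bound y ω
  have h_dual_integral : ∫ ω, toDual (G x ω) ∂μ = toDual (∫ ω, G x ω ∂μ) := by
    ext v
    rw [ContinuousLinearMap.integral_apply
      (h_bound_int.mono' h_dual_meas (.of_forall (h_dual_bound x)))]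
    simp [toDual, real_inner_comm v, ← integral_inner hG_int]
  rw [hasGradientAt_iff_hasFDerivAt, ← h_dual_integral]
  exact hasFDerivAt_integral_of_dominated_of_fderiv_le Filter.univ_mem (.of_forall hf_meas)
    hf_int h_dual_meas (.of_forall fun ω y _ => h_dual_bound y ω) h_bound_int
    (.of_forall fun ω y _ => (h_grad y ω).hasFDerivAt)

section AdditiveGaussianNoise

variable {Ω : Type*} [MeasurableSpace Ω]
  {E : Type*} [NormedAddCommGroup E] [InnerProductSpace ℝ E]

/-- The mixture `x ↦ ∫ φ_s (x - Y ω) ∂P` of centered Gaussian densities `φ_s` of variance `s`: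
the Lebesgue density of the law of the noisy observation `Y + √s Z` of `Y`. -/
def noisyDensity (P : Measure Ω) (Y : Ω → E) (s : ℝ) (x : E) : ℝ :=
  ∫ ω, gaussianDensity s (x - Y ω) ∂P

/-- The conditional law of `ω` given that the noisy observation `Y ω + √s Z` equals `x`, with
density `φ_s (x - Y ω) / ∫ φ_s (x - Y ω') ∂P` given by Bayes' formula. -/
def noisyPosterior [MeasurableSpace E] (P : Measure Ω) [SFinite P] (Y : Ω → E) (s : ℝ) :
    ProbabilityTheory.Kernel E Ω :=
  (ProbabilityTheory.Kernel.const E P).withDensity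
    fun x ω => ENNReal.ofReal (gaussianDensity s (x - Y ω) / noisyDensity P Y s x)

/-- The law of the noisy observation `Y + √s Z` of the signal `Y`, where the standard Gaussian
noise `Z` is independent of `Y`. -/
def noisyLaw [FiniteDimensional ℝ E] [MeasurableSpace E] (P : Measure Ω) (Y : Ω → E) (s : ℝ) :
    Measure E :=
  (P.prod (ProbabilityTheory.stdGaussian E)).map fun q => Y q.1 + √s • q.2

variable {P : Measure Ω} {Y : Ω → E} {s : ℝ}

lemma noisyDensity_eq_zero_mul_integral_exp (P : Measure Ω) (Y : Ω → E) (s : ℝ) (x : E) :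
    noisyDensity P Y s x =
      gaussianDensity s (0 : E) * ∫ ω, exp (-‖x - Y ω‖ ^ 2 / (2 * s)) ∂P := by
  rw [noisyDensity, ← integral_const_mul]
  congr with ω
  exact gaussianDensity_eq_zero_mul_exp s _

variable [MeasurableSpace E] [BorelSpace E]

lemma integrable_gaussianDensity_sub [IsFiniteMeasure P] (hY : Measurable Y) (hs : 0 < s) (x : E) :
    Integrable (fun ω => gaussianDensity s (x - Y ω)) P :=
  .of_bound (Measurable.aestronglyMeasurable (by fun_prop)) _ (.of_forall fun ω => by
    rw [norm_of_nonneg (gaussianDensity_pos hs _).le]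
    exact gaussianDensity_le_zero hs _)

lemma integrable_exp_neg_norm_sub_sq [IsFiniteMeasure P] (hY : Measurable Y) (hs : 0 < s) (x : E) :
    Integrable (fun ω => exp (-‖x - Y ω‖ ^ 2 / (2 * s))) P := by
  refine ((integrable_gaussianDensity_sub hY hs x).const_mul
    (gaussianDensity s (0 : E))⁻¹).congr (.of_forall fun ω => ?_)
  simp only [gaussianDensity_eq_zero_mul_exp s (x - Y ω)]
  exact inv_mul_cancel_left₀ (gaussianDensity_pos hs 0).ne' _

lemma noisyDensity_pos [IsFiniteMeasure P] [NeZero P] (hY : Measurable Y) (hs : 0 < s) (x : E) :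
    0 < noisyDensity P Y s x := by
  rw [noisyDensity_eq_zero_mul_integral_exp]
  exact mul_pos (gaussianDensity_pos hs 0)
    (integral_exp_pos (integrable_exp_neg_norm_sub_sq hY hs x))

lemma toReal_ofReal_gaussianDensity_div_smul {F : Type*} [NormedAddCommGroup F]
    [NormedSpace ℝ F] [IsFiniteMeasure P] [NeZero P] (hY : Measurable Y) (hs : 0 < s) (x : E)
    (ω : Ω) (v : F) :
    (ENNReal.ofReal (gaussianDensity s (x - Y ω) / noisyDensity P Y s x)).toReal • v =
      (noisyDensity P Y s x)⁻¹ • gaussianDensity s (x - Y ω) • v := by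
  have h_pos := noisyDensity_pos (P := P) hY hs x
  rw [ENNReal.toReal_ofReal (div_nonneg (gaussianDensity_pos hs _).le h_pos.le), smul_smul,
    div_eq_inv_mul]

variable [SecondCountableTopology E]

lemma hasGradientAt_noisyDensity [CompleteSpace E] [IsFiniteMeasure P] (hY : Measurable Y)
    (hs : 0 < s) (x : E) :
    HasGradientAt (noisyDensity P Y s)
      (s⁻¹ • ∫ ω, gaussianDensity s (x - Y ω) • (Y ω - x) ∂P) x := by
  rw [← integral_smul]
  refine hasGradientAt_integral_of_dominated
    (G := fun y ω => s⁻¹ • gaussianDensity s (y - Y ω) • (Y ω - y))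
    (bound := fun _ => s⁻¹ * ((1 + 2 * s) * gaussianDensity s (0 : E)))
    (fun y => (integrable_gaussianDensity_sub hY hs y).aestronglyMeasurable)
    (integrable_gaussianDensity_sub hY hs x) (Measurable.aestronglyMeasurable (by fun_prop))
    (fun y ω => ?_) (integrable_const _) (fun y ω => ?_)
  · rw [norm_smul, norm_smul, norm_of_nonneg (gaussianDensity_pos hs _).le, norm_inv,
      norm_of_nonneg hs.le, norm_sub_rev]
    exact mul_le_mul_of_nonneg_left (gaussianDensity_mul_norm_le hs _) (inv_nonneg.2 hs.le)
  · rw [smul_smul, ← neg_sub y, smul_neg, ← neg_smul, hasGradientAt_iff_hasFDerivAt]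
    exact (hasGradientAt_gaussianDensity s (y - Y ω)).hasFDerivAt.comp y (hasFDerivAt_sub_const _)

@[fun_prop]
lemma measurable_noisyDensity [SFinite P] (hY : Measurable Y) :
    Measurable (noisyDensity P Y s) := by
  have h_joint : Measurable fun q : E × Ω => gaussianDensity s (q.1 - Y q.2) := by fun_prop
  exact h_joint.stronglyMeasurable.integral_prod_right'.measurable

lemma noisyPosterior_apply [SFinite P] (hY : Measurable Y) (x : E) :
    noisyPosterior P Y s x = P.withDensity
      fun ω => ENNReal.ofReal (gaussianDensity s (x - Y ω) / noisyDensity P Y s x) := by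
  rw [noisyPosterior,
    ProbabilityTheory.Kernel.withDensity_apply _ (by fun_prop (disch := assumption)),
    ProbabilityTheory.Kernel.const_apply]

lemma noisyPosterior_eq_tilted [SFinite P] (hY : Measurable Y) (hs : 0 < s) (x : E) :
    noisyPosterior P Y s x = P.tilted fun ω => -‖x - Y ω‖ ^ 2 / (2 * s) := by
  rw [noisyPosterior_apply hY, Measure.tilted, noisyDensity_eq_zero_mul_integral_exp]
  congr with ω
  rw [gaussianDensity_eq_zero_mul_exp, mul_div_mul_left _ _ (gaussianDensity_pos hs 0).ne']

lemma isMarkovKernel_noisyPosterior [IsFiniteMeasure P] [NeZero P] (hY : Measurable Y)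
    (hs : 0 < s) : ProbabilityTheory.IsMarkovKernel (noisyPosterior P Y s) where
  isProbabilityMeasure x := by
    rw [noisyPosterior_eq_tilted hY hs]
    exact isProbabilityMeasure_tilted (integrable_exp_neg_norm_sub_sq hY hs x)

section BayesFormula

variable {F : Type*} [NormedAddCommGroup F] [NormedSpace ℝ F] [IsFiniteMeasure P] [NeZero P]

lemma integrable_noisyPosterior_iff (hY : Measurable Y) (hs : 0 < s) (x : E) (f : Ω → F) :
    Integrable f (noisyPosterior P Y s x) ↔
      Integrable (fun ω => gaussianDensity s (x - Y ω) • f ω) P := by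
  rw [noisyPosterior_apply hY, integrable_withDensity_iff_integrable_smul₀' (by fun_prop) (by simp)]
  simp_rw [toReal_ofReal_gaussianDensity_div_smul hY hs]
  exact integrable_fun_smul_iff (inv_ne_zero (noisyDensity_pos hY hs x).ne') _

lemma integral_noisyPosterior (hY : Measurable Y) (hs : 0 < s) (x : E) (f : Ω → F) :
    ∫ ω, f ω ∂noisyPosterior P Y s x =
      (noisyDensity P Y s x)⁻¹ • ∫ ω, gaussianDensity s (x - Y ω) • f ω ∂P := by
  rw [noisyPosterior_apply hY, integral_withDensity_eq_integral_toReal_smul (by fun_prop) (by simp)]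
  simp_rw [toReal_ofReal_gaussianDensity_div_smul hY hs, integral_smul]

lemma memLp_noisyPosterior (hY : Measurable Y) (hs : 0 < s) (x : E) :
    MemLp Y 2 (noisyPosterior P Y s x) := by
  have := isMarkovKernel_noisyPosterior (P := P) hY hs
  have h_residual : MemLp (fun ω => x - Y ω) 2 (noisyPosterior P Y s x) := by
    rw [memLp_two_iff_integrable_sq_norm (Measurable.aestronglyMeasurable (by fun_prop)),
      integrable_noisyPosterior_iff hY hs]
    refine .of_bound (Measurable.aestronglyMeasurable (by fun_prop))
      (2 * s * gaussianDensity s (0 : E)) (.of_forall fun ω => ?_)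
    rw [smul_eq_mul, norm_of_nonneg (mul_nonneg (gaussianDensity_pos hs _).le (sq_nonneg _))]
    exact gaussianDensity_mul_norm_sq_le hs _
  exact ((memLp_const x).sub h_residual).ae_eq (.of_forall fun ω => sub_sub_cancel x (Y ω))

lemma gradient_log_noisyDensity [CompleteSpace E] (hY : Measurable Y) (hs : 0 < s) (x : E) :
    gradient (fun y => Real.log (noisyDensity P Y s y)) x =
      s⁻¹ • (∫ ω, Y ω ∂noisyPosterior P Y s x - x) := by
  have := isMarkovKernel_noisyPosterior (P := P) hY hs
  have h_log := (hasGradientAt_noisyDensity (P := P) hY hs x).hasFDerivAt.log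
    (noisyDensity_pos hY hs x).ne'
  calc gradient (fun y => Real.log (noisyDensity P Y s y)) x
      = s⁻¹ • ∫ ω, (Y ω - x) ∂noisyPosterior P Y s x := by
        rw [gradient, h_log.fderiv, integral_noisyPosterior hY hs, smul_comm]
        simp
    _ = s⁻¹ • (∫ ω, Y ω ∂noisyPosterior P Y s x - x) := by
        rw [integral_sub ((memLp_noisyPosterior hY hs x).integrable one_le_two)
          (integrable_const x)]
        simp

end BayesFormula

end AdditiveGaussianNoise

section Disintegration

open scoped ProbabilityTheory

variable {Ω : Type*} [MeasurableSpace Ω]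
  {E : Type*} [NormedAddCommGroup E] [InnerProductSpace ℝ E] [FiniteDimensional ℝ E]
  [MeasurableSpace E] [BorelSpace E] {P : Measure Ω} {Y : Ω → E} {s : ℝ}

instance [SFinite P] : SFinite (noisyLaw P Y s) := by
  unfold noisyLaw
  infer_instance

lemma lintegral_prod_stdGaussian [SFinite P] (hY : Measurable Y) (hs : 0 < s)
    {f : E × Ω → ℝ≥0∞} (hf : Measurable f) :
    ∫⁻ q, f (Y q.1 + √s • q.2, q.1) ∂P.prod (ProbabilityTheory.stdGaussian E) =
      ∫⁻ x, ∫⁻ ω, ENNReal.ofReal (gaussianDensity s (x - Y ω)) * f (x, ω) ∂P := by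
  calc ∫⁻ q, f (Y q.1 + √s • q.2, q.1) ∂P.prod (ProbabilityTheory.stdGaussian E)
      = ∫⁻ ω, ∫⁻ g, f (Y ω + √s • g, ω) ∂ProbabilityTheory.stdGaussian E ∂P :=
        lintegral_prod _ (by fun_prop)
    _ = ∫⁻ ω, (∫⁻ x, ENNReal.ofReal (gaussianDensity s (x - Y ω)) * f (x, ω)) ∂P :=
        lintegral_congr fun ω => lintegral_comp_add_smul_stdGaussian hs (Y ω)
          (f := fun x => f (x, ω)) (by fun_prop)
    _ = ∫⁻ x, ∫⁻ ω, ENNReal.ofReal (gaussianDensity s (x - Y ω)) * f (x, ω) ∂P :=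
        lintegral_lintegral_swap (Measurable.aemeasurable (by fun_prop))

lemma noisyLaw_eq_withDensity [IsFiniteMeasure P] (hY : Measurable Y) (hs : 0 < s) :
    noisyLaw P Y s = volume.withDensity fun x => ENNReal.ofReal (noisyDensity P Y s x) := by
  refine Measure.ext_of_lintegral _ fun f hf => ?_
  rw [noisyLaw, lintegral_map hf (by fun_prop),
    lintegral_prod_stdGaussian hY hs (f := fun q => f q.1) (by fun_prop),
    lintegral_withDensity_eq_lintegral_mul _ (by fun_prop) hf]
  refine lintegral_congr fun x => ?_
  rw [lintegral_mul_const (f x) (by fun_prop), Pi.mul_apply, noisyDensity,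
    ofReal_integral_eq_lintegral_ofReal (integrable_gaussianDensity_sub hY hs x)
      (.of_forall fun ω => (gaussianDensity_pos hs _).le)]

lemma noisyDensity_mul_lintegral_noisyPosterior [IsFiniteMeasure P] [NeZero P]
    (hY : Measurable Y) (hs : 0 < s) (x : E) {f : Ω → ℝ≥0∞} (hf : Measurable f) :
    ENNReal.ofReal (noisyDensity P Y s x) * ∫⁻ ω, f ω ∂noisyPosterior P Y s x =
      ∫⁻ ω, ENNReal.ofReal (gaussianDensity s (x - Y ω)) * f ω ∂P := by
  have h_pos := noisyDensity_pos (P := P) hY hs x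
  rw [noisyPosterior_apply hY, lintegral_withDensity_eq_lintegral_mul _ (by fun_prop) hf,
    ← lintegral_const_mul _ (by fun_prop)]
  refine lintegral_congr fun ω => ?_
  rw [Pi.mul_apply, ← mul_assoc, ← ENNReal.ofReal_mul h_pos.le, mul_div_cancel₀ _ h_pos.ne']

lemma map_prod_stdGaussian_eq_compProd [IsFiniteMeasure P] [NeZero P] (hY : Measurable Y)
    (hs : 0 < s) :
    (P.prod (ProbabilityTheory.stdGaussian E)).map (fun q => (Y q.1 + √s • q.2, q.1)) =
      noisyLaw P Y s ⊗ₘ noisyPosterior P Y s := by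
  have := isMarkovKernel_noisyPosterior (P := P) hY hs
  refine Measure.ext_of_lintegral _ fun f hf => ?_
  rw [lintegral_map hf (by fun_prop), lintegral_prod_stdGaussian hY hs hf,
    Measure.lintegral_compProd hf, noisyLaw_eq_withDensity hY hs,
    lintegral_withDensity_eq_lintegral_mul _ (by fun_prop) hf.lintegral_kernel_prod_right']
  exact lintegral_congr fun x =>
    (noisyDensity_mul_lintegral_noisyPosterior hY hs x (by fun_prop)).symm

lemma integrable_norm_sub_sq_compProd [IsProbabilityMeasure P] (hY : Measurable Y) (hs : 0 < s) :
    Integrable (fun q : E × Ω => ‖q.1 - Y q.2‖ ^ 2) (noisyLaw P Y s ⊗ₘ noisyPosterior P Y s) := by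
  rw [← map_prod_stdGaussian_eq_compProd hY hs, integrable_map_measure
    (Measurable.aestronglyMeasurable (by fun_prop)) (by fun_prop)]
  have h_noise : Integrable (fun g : E => ‖g‖ ^ 2) (ProbabilityTheory.stdGaussian E) :=
    ProbabilityTheory.IsGaussian.memLp_two_id.integrable_norm_pow two_ne_zero
  refine ((h_noise.comp_snd P).const_mul s).congr (.of_forall fun q => ?_)
  simp [norm_smul, mul_pow, sq_sqrt hs.le]

lemma integral_norm_sub_sq_compProd [IsProbabilityMeasure P] (hY : Measurable Y) (hs : 0 < s) :
    ∫ q, ‖q.1 - Y q.2‖ ^ 2 ∂(noisyLaw P Y s ⊗ₘ noisyPosterior P Y s) =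
      s * Module.finrank ℝ E := by
  rw [← map_prod_stdGaussian_eq_compProd hY hs, integral_map (by fun_prop)
    (Measurable.aestronglyMeasurable (by fun_prop))]
  simp only [add_sub_cancel_left, norm_smul, norm_of_nonneg (sqrt_nonneg s), mul_pow, sq_sqrt hs.le]
  rw [integral_const_mul, integral_fun_snd (fun g : E => ‖g‖ ^ 2), integral_norm_sq_stdGaussian]
  simp

lemma integral_norm_sub_sq_noisyPosterior [IsFiniteMeasure P] [NeZero P] (hY : Measurable Y)
    (hs : 0 < s) (x : E) :
    ∫ ω, ‖x - Y ω‖ ^ 2 ∂noisyPosterior P Y s x =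
      s ^ 2 * ‖gradient (fun y => Real.log (noisyDensity P Y s y)) x‖ ^ 2 +
        ∫ ω, ‖Y ω - ∫ ω, Y ω ∂noisyPosterior P Y s x‖ ^ 2 ∂noisyPosterior P Y s x := by
  have := isMarkovKernel_noisyPosterior (P := P) hY hs
  rw [integral_norm_const_sub_sq_eq_add (memLp_noisyPosterior hY hs x),
    gradient_log_noisyDensity hY hs, norm_smul, mul_pow, norm_inv, norm_of_nonneg hs.le, inv_pow,
    mul_inv_cancel_left₀ (pow_ne_zero 2 hs.ne'), norm_sub_rev]

theorem integral_norm_sq_gradient_log_noisyDensity [IsProbabilityMeasure P] (hY : Measurable Y)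
    (hs : 0 < s) :
    ∫ x, ‖gradient (fun y => Real.log (noisyDensity P Y s y)) x‖ ^ 2 ∂noisyLaw P Y s =
      Module.finrank ℝ E / s - 1 / s ^ 2 *
        ∫ x, ∫ ω, ‖Y ω - ∫ ω, Y ω ∂noisyPosterior P Y s x‖ ^ 2 ∂noisyPosterior P Y s x
          ∂noisyLaw P Y s := by
  have := isMarkovKernel_noisyPosterior (P := P) hY hs
  set scoreSq : E → ℝ := fun x => ‖gradient (fun y => Real.log (noisyDensity P Y s y)) x‖ ^ 2
  set trCov : E → ℝ := fun x =>
    ∫ ω, ‖Y ω - ∫ ω, Y ω ∂noisyPosterior P Y s x‖ ^ 2 ∂noisyPosterior P Y s x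
  have h_trCov_nonneg (x : E) : 0 ≤ trCov x := integral_nonneg fun ω => sq_nonneg _
  have h_decomp (x : E) : ∫ ω, ‖x - Y ω‖ ^ 2 ∂noisyPosterior P Y s x =
      s ^ 2 * scoreSq x + trCov x := integral_norm_sub_sq_noisyPosterior hY hs x
  have h_residual_int : Integrable (fun x => s ^ 2 * scoreSq x + trCov x) (noisyLaw P Y s) := by
    simp_rw [← h_decomp]
    exact (integrable_norm_sub_sq_compProd hY hs).integral_compProd
  have h_residual : ∫ x, (s ^ 2 * scoreSq x + trCov x) ∂noisyLaw P Y s =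
      s * Module.finrank ℝ E := by
    simp_rw [← integral_norm_sub_sq_compProd (P := P) hY hs, ← h_decomp]
    exact (Measure.integral_compProd (integrable_norm_sub_sq_compProd hY hs)).symm
  have h_score_int : Integrable (fun x => s ^ 2 * scoreSq x) (noisyLaw P Y s) := by
    have h_meas : Measurable scoreSq := (measurable_gradient _).norm.pow_const 2
    refine h_residual_int.mono' (h_meas.const_mul _).aestronglyMeasurable (.of_forall fun x => ?_)
    rw [norm_of_nonneg (by positivity)]
    linarith [h_trCov_nonneg x]
  have h_trCov_int : Integrable trCov (noisyLaw P Y s) :=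
    (h_residual_int.sub h_score_int).congr (.of_forall fun x => add_sub_cancel_left _ _)
  rw [integral_add h_score_int h_trCov_int, integral_const_mul] at h_residual
  field_simp
  linarith

end Disintegration

lemma stdGaussian_eq_probabilityTheory_stdGaussian (d : ℕ) :
    stdGaussian d = ProbabilityTheory.stdGaussian (Euc d) := by
  calc stdGaussian d
      = volume.withDensity fun x : Euc d => ENNReal.ofReal (gaussianDensity 1 x) := by
        simp [stdGaussian, gaussianDensity]
    _ = ProbabilityTheory.stdGaussian (Euc d) := by
        simp [withDensity_gaussianDensity one_pos]

lemma ouMarginal_eq_noisyLaw (d : ℕ) (p : Measure (Euc d)) (t : ℝ) :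
    ouMarginal d p t = noisyLaw p (exp (-t) • ·) (1 - exp (-2 * t)) := by
  rw [ouMarginal, stdGaussian_eq_probabilityTheory_stdGaussian, noisyLaw]

lemma ouDensity_eq_noisyDensity (d : ℕ) (p : Measure (Euc d)) (t : ℝ) :
    ouDensity d p t = noisyDensity p (exp (-t) • ·) (1 - exp (-2 * t)) := by
  ext x
  rw [ouDensity, noisyDensity_eq_zero_mul_integral_exp, gaussianDensity_zero,
    finrank_euclideanSpace_fin]

lemma posterior_eq_noisyPosterior {d : ℕ} {p : Measure (Euc d)} [IsProbabilityMeasure p] {t : ℝ}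
    (hs : 0 < 1 - exp (-2 * t)) (x : Euc d) :
    posterior d p t x = noisyPosterior p (exp (-t) • ·) (1 - exp (-2 * t)) x := by
  have hY : Measurable (exp (-t) • · : Euc d → Euc d) := by fun_prop
  rw [noisyPosterior_eq_tilted hY hs,
    tilted_eq_inv_smul_withDensity (integrable_exp_neg_norm_sub_sq hY hs x), posterior]

lemma integral_norm_smul_sub_sq_posterior (d : ℕ) (p : Measure (Euc d)) (t : ℝ) (x : Euc d)
    (c : ℝ) :
    ∫ z, ‖c • z - ∫ z, c • z ∂posterior d p t x‖ ^ 2 ∂posterior d p t x =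
      c ^ 2 * postTrCov d p t x := by
  rw [integral_smul, postTrCov, postMean, ← integral_const_mul]
  simp_rw [← smul_sub, norm_smul, mul_pow, norm_eq_abs, sq_abs]

theorem score_second_moment_general
    (d : ℕ) (p : Measure (Euc d)) [IsProbabilityMeasure p] (t : ℝ) (ht : 0 < t) :
    (∫ x, ‖score d p t x‖ ^ 2 ∂(ouMarginal d p t)) =
      (d : ℝ) / (1 - exp (-2 * t)) -
        exp (-2 * t) / (1 - exp (-2 * t)) ^ 2 *
          ∫ x, postTrCov d p t x ∂(ouMarginal d p t) := by
  have hY : Measurable (exp (-t) • · : Euc d → Euc d) := by fun_prop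
  have hs : 0 < 1 - exp (-2 * t) := sub_pos.2 (exp_lt_one_iff.2 (by linarith))
  have h_scale : exp (-t) ^ 2 = exp (-2 * t) := by rw [← exp_nat_mul]; ring_nf
  have h_noisy := integral_norm_sq_gradient_log_noisyDensity (P := p) hY hs
  simp_rw [← posterior_eq_noisyPosterior hs, integral_norm_smul_sub_sq_posterior, h_scale,
    integral_const_mul, finrank_euclideanSpace_fin] at h_noisy
  rw [← ouMarginal_eq_noisyLaw, ← ouDensity_eq_noisyDensity, ← mul_assoc] at h_noisy
  simpa [score, div_eq_inv_mul] using h_noisy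

/-- **Second moment of the score in terms of the posterior covariance**
(equation (2-norm of score) used in Lemma B.4): for every `t > 0`,
`E_{x ∼ p_t} ‖∇ ln p_t(x)‖² = d/(1-e^{-2t}) - (e^{-2t}/(1-e^{-2t})²) E_{x ∼ p_t}[Tr Σ_t(x)]`. -/
theorem score_second_moment
    (d : ℕ) (hd : 1 ≤ d) (V : Euc d → ℝ) (hV : Measurable V)
    (p : Measure (Euc d)) (hprob : IsProbabilityMeasure p)
    (hp : p = ((gibbs d V) Set.univ)⁻¹ • gibbs d V)
    (hm2 : Integrable (fun x => ‖x‖ ^ 2) p)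
    (t : ℝ) (ht : 0 < t) :
    (∫ x, ‖score d p t x‖ ^ 2 ∂(ouMarginal d p t)) =
      (d : ℝ) / (1 - exp (-2 * t)) -
        exp (-2 * t) / (1 - exp (-2 * t)) ^ 2 *
          ∫ x, postTrCov d p t x ∂(ouMarginal d p t) :=
  score_second_moment_general d p t ht
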